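/- Assume m23 + m33 = 0 (the class 2 nontypicality condition; note m13 + m33 + 1 ≠ 0 then follows from m13 ≥ m23). Then I_2 := V_1 ⊕ V_3 is a proper invariant subspace of W, every proper invariant subspace of W is contained in I_2, and the operators induced by E11, E22, E33, E12, E21, E23, E32 on the quotient space W/I_2 leave no subspace invariant except {0} and W/I_2; i.e. W/I_2 carries the class 2 nontypical irreducible representation of U_q[gl(2/1)]. -/

import Mathlib

/-!
Since `[m23 + m33] = 0`, `E23` kills `V₁` and maps `V₃` into `V₁`, which makes `I₂ = V₁ ⊕ V₃`
invariant.

The rest comes from a dichotomy: an invariant `U` either lies in `I₂` or is all of `W`. If `U ⊄ I₂`,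
some `u ∈ U` has a nonzero coordinate in sector `0` or `2`. The weight spaces of `E33` and `E11` are
spanned by `v(0, x)`, by `v(1, x)` and `v(2, x)`, or by `v(3, x)`, and `U` is a sum of its weight
spaces. Hence `U` contains either `v(0, x)` or a combination `a v(1, x) + b v(2, x)` with `b ≠ 0`,
which `E23` maps to a nonzero multiple of `v(0, x)` because `[m13 + m33 + 1] ≠ 0`. The raising and
lowering operators then give `V₀ ⊆ U`, and `V₀` generates `W`. Applied to preimages under
`W → W/I₂`, the dichotomy is the irreducibility of the quotient.
-/

noncomputable section

/-- The `q`-number `[x] = (q^x - q^(-x))/(q - q⁻¹)`. -/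
def qn (q : ℝ) (x : ℤ) : ℝ := (q ^ x - q ^ (-x)) / (q - q⁻¹)

/-- The triple `(m12, m22, m32)` attached to the sector `k ∈ {0,1,2,3}`. -/
def trip (m13 m23 m33 : ℤ) : Fin 4 → ℤ × ℤ × ℤ
  | 0 => (m13, m23, m33)
  | 1 => (m13, m23 - 1, m33 + 1)
  | 2 => (m13 - 1, m23, m33 + 1)
  | 3 => (m13 - 1, m23 - 1, m33 + 2)

def M12 (m13 m23 m33 : ℤ) (k : Fin 4) : ℤ := (trip m13 m23 m33 k).1
def M22 (m13 m23 m33 : ℤ) (k : Fin 4) : ℤ := (trip m13 m23 m33 k).2.1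
def M32 (m13 m23 m33 : ℤ) (k : Fin 4) : ℤ := (trip m13 m23 m33 k).2.2

/-- `m11` is in the allowed range `m22 ≤ m11 ≤ m12` of the sector `k`. -/
def InR (m13 m23 m33 : ℤ) (k : Fin 4) (x : ℤ) : Prop :=
  M22 m13 m23 m33 k ≤ x ∧ x ≤ M12 m13 m23 m33 k

instance (m13 m23 m33 : ℤ) (k : Fin 4) (x : ℤ) : Decidable (InR m13 m23 m33 k x) :=
  instDecidableAnd

/-- The index set of the basis `v(k, m11)` of `W`. -/
abbrev Idx (m13 m23 m33 : ℤ) : Type :=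
  {p : Fin 4 × ℤ // InR m13 m23 m33 p.1 p.2}

/-- The module `W = W^q([m13,m23,m33])`, realized as the free complex vector
space on the basis `v(k, m11)`, `k ∈ {0,1,2,3}`, `m22 ≤ m11 ≤ m12`. -/
abbrev Wsp (m13 m23 m33 : ℤ) : Type := Idx m13 m23 m33 →₀ ℂ

/-- The basis vector `v(k, m11)` (zero if `m11` is out of range). -/
def bv (m13 m23 m33 : ℤ) (k : Fin 4) (x : ℤ) : Wsp m13 m23 m33 :=
  if h : InR m13 m23 m33 k x then Finsupp.single ⟨(k, x), h⟩ 1 else 0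

/-- The sector `V_k`, the span of the `v(k, ·)`. -/
def Vk (m13 m23 m33 : ℤ) (k : Fin 4) : Submodule ℂ (Wsp m13 m23 m33) :=
  Submodule.span ℂ (Set.range (bv m13 m23 m33 k))

/-- The Gel'fand--Zetlin realization of the induced `U_q[gl(2/1)]`-module
`W^q([m13,m23,m33])`: seven linear operators acting on the basis `v(k, m11)`
by the stated formulas (terms with `m11` out of range being `0`). -/
structure GZ (q : ℝ) (m13 m23 m33 : ℤ) where
  E11 : Wsp m13 m23 m33 →ₗ[ℂ] Wsp m13 m23 m33
  E22 : Wsp m13 m23 m33 →ₗ[ℂ] Wsp m13 m23 m33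
  E33 : Wsp m13 m23 m33 →ₗ[ℂ] Wsp m13 m23 m33
  E12 : Wsp m13 m23 m33 →ₗ[ℂ] Wsp m13 m23 m33
  E21 : Wsp m13 m23 m33 →ₗ[ℂ] Wsp m13 m23 m33
  E23 : Wsp m13 m23 m33 →ₗ[ℂ] Wsp m13 m23 m33
  E32 : Wsp m13 m23 m33 →ₗ[ℂ] Wsp m13 m23 m33
  hE11 : ∀ (k : Fin 4) (x : ℤ), InR m13 m23 m33 k x →
    E11 (bv m13 m23 m33 k x) = (x : ℂ) • bv m13 m23 m33 k x
  hE22 : ∀ (k : Fin 4) (x : ℤ), InR m13 m23 m33 k x →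
    E22 (bv m13 m23 m33 k x) =
      ((M12 m13 m23 m33 k + M22 m13 m23 m33 k - x : ℤ) : ℂ) • bv m13 m23 m33 k x
  hE33 : ∀ (k : Fin 4) (x : ℤ), InR m13 m23 m33 k x →
    E33 (bv m13 m23 m33 k x) = ((M32 m13 m23 m33 k : ℤ) : ℂ) • bv m13 m23 m33 k x
  hE12 : ∀ (k : Fin 4) (x : ℤ), InR m13 m23 m33 k x →
    E12 (bv m13 m23 m33 k x) =
      ((Real.sqrt (qn q (M12 m13 m23 m33 k - x) * qn q (x - M22 m13 m23 m33 k + 1)) : ℝ) : ℂ) •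
        bv m13 m23 m33 k (x + 1)
  hE21 : ∀ (k : Fin 4) (x : ℤ), InR m13 m23 m33 k x →
    E21 (bv m13 m23 m33 k x) =
      ((Real.sqrt (qn q (M12 m13 m23 m33 k - x + 1) * qn q (x - M22 m13 m23 m33 k)) : ℝ) : ℂ) •
        bv m13 m23 m33 k (x - 1)
  hE23₀ : ∀ x : ℤ, InR m13 m23 m33 0 x → E23 (bv m13 m23 m33 0 x) = 0
  hE23₁ : ∀ x : ℤ, InR m13 m23 m33 1 x →
    E23 (bv m13 m23 m33 1 x) =
      ((Real.sqrt (qn q (x - m23 + 1) / qn q (m13 - m23 + 1)) * qn q (m23 + m33) : ℝ) : ℂ) •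
        bv m13 m23 m33 0 x
  hE23₂ : ∀ x : ℤ, InR m13 m23 m33 2 x →
    E23 (bv m13 m23 m33 2 x) =
      ((Real.sqrt (qn q (m13 - x) / qn q (m13 - m23)) * qn q (m13 + m33 + 1) : ℝ) : ℂ) •
        bv m13 m23 m33 0 x
  hE23₃ : ∀ x : ℤ, InR m13 m23 m33 3 x →
    E23 (bv m13 m23 m33 3 x) =
      ((q⁻¹ * Real.sqrt (qn q (m13 - x) / qn q (m13 - m23 + 1)) * qn q (m13 + m33 + 1) : ℝ) : ℂ) •
          bv m13 m23 m33 1 x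
        - ((q⁻¹ * Real.sqrt (qn q (x - m23 + 1) * qn q (m13 - m23)) *
            (qn q (m23 + m33) / qn q (m13 - m23 + 1)) : ℝ) : ℂ) • bv m13 m23 m33 2 x
  hE32₀ : ∀ x : ℤ, InR m13 m23 m33 0 x →
    E32 (bv m13 m23 m33 0 x) =
      ((Real.sqrt (qn q (x - m23 + 1) / qn q (m13 - m23 + 1)) : ℝ) : ℂ) • bv m13 m23 m33 1 x
        + ((Real.sqrt (qn q (m13 - x) * qn q (m13 - m23)) / qn q (m13 - m23 + 1) : ℝ) : ℂ) •
            bv m13 m23 m33 2 x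
  hE32₁ : ∀ x : ℤ, InR m13 m23 m33 1 x →
    E32 (bv m13 m23 m33 1 x) =
      ((q * Real.sqrt (qn q (m13 - x) / qn q (m13 - m23 + 1)) : ℝ) : ℂ) • bv m13 m23 m33 3 x
  hE32₂ : ∀ x : ℤ, InR m13 m23 m33 2 x →
    E32 (bv m13 m23 m33 2 x) =
      -(((q * Real.sqrt (qn q (x - m23 + 1) / qn q (m13 - m23)) : ℝ) : ℂ) • bv m13 m23 m33 3 x)
  hE32₃ : ∀ x : ℤ, InR m13 m23 m33 3 x → E32 (bv m13 m23 m33 3 x) = 0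

/-- A subspace `U` of `W` is invariant if it is stable under all seven
operators `E11, E22, E33, E12, E21, E23, E32`. -/
def Invariant (q : ℝ) (m13 m23 m33 : ℤ) (R : GZ q m13 m23 m33)
    (U : Submodule ℂ (Wsp m13 m23 m33)) : Prop :=
  ∀ E ∈ ({R.E11, R.E22, R.E33, R.E12, R.E21, R.E23, R.E32} :
      Set (Wsp m13 m23 m33 →ₗ[ℂ] Wsp m13 m23 m33)),
    ∀ x ∈ U, E x ∈ U

theorem qn_zero (q : ℝ) : qn q 0 = 0 := by simp [qn]

theorem qn_pos {q : ℝ} (hq : 0 < q) (hq1 : q ≠ 1) {n : ℤ} (hn : 0 < n) : 0 < qn q n := by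
  unfold qn
  rcases lt_or_gt_of_ne hq1 with hlt | hgt
  · have hpow : q ^ n < q ^ (-n) := zpow_lt_zpow_right_of_lt_one₀ hq hlt (by lia)
    have hinv : 1 < q⁻¹ := (one_lt_inv₀ hq).2 hlt
    exact div_pos_of_neg_of_neg (by linarith) (by linarith)
  · have hpow : q ^ (-n) < q ^ n := zpow_lt_zpow_right₀ hgt (by lia)
    have hinv : q⁻¹ < 1 := inv_lt_one_of_one_lt₀ hgt
    exact div_pos (by linarith) (by linarith)

theorem eq_bot_or_eq_top_of_comap_mkQ {R M : Type*} [Ring R] [AddCommGroup M] [Module R M]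
    {N : Submodule R M} {P : Submodule R (M ⧸ N)}
    (h : P.comap N.mkQ ≤ N ∨ P.comap N.mkQ = ⊤) : P = ⊥ ∨ P = ⊤ := by
  have hinj := Submodule.comap_injective_of_surjective N.mkQ_surjective
  refine h.imp (fun hle => hinj ?_) (fun htop => hinj ?_)
  · exact (hle.antisymm (N.le_comap_mkQ P)).trans N.ker_mkQ.symm
  · rw [htop, Submodule.comap_top]

theorem mem_of_ofReal_smul_mem {V : Type*} [AddCommGroup V] [Module ℂ V] {U : Submodule ℂ V}
    {c : ℝ} {v : V} (hc : c ≠ 0) (h : (c : ℂ) • v ∈ U) : v ∈ U :=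
  (U.smul_mem_iff (Complex.ofReal_ne_zero.2 hc)).1 h

section Diagonal

variable {ι K : Type*} [Field K] {D : Module.End K (ι →₀ K)} {ev : ι → K}

theorem diagonal_apply (hD : ∀ i, D (Finsupp.single i 1) = ev i • Finsupp.single i 1)
    (u : ι →₀ K) (i : ι) : D u i = ev i * u i := by
  have hcoord : Finsupp.lapply i ∘ₗ D = ev i • Finsupp.lapply i := by
    classical
    ext j
    rcases eq_or_ne j i with rfl | hji <;> simp [*]
  exact LinearMap.congr_fun hcoord u

theorem aeval_diagonal_apply (hD : ∀ i, D (Finsupp.single i 1) = ev i • Finsupp.single i 1)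
    (p : Polynomial K) (u : ι →₀ K) (i : ι) :
    Polynomial.aeval D p u i = p.eval (ev i) * u i :=
  diagonal_apply (ev := fun j => p.eval (ev j)) (fun j => Module.End.aeval_apply_of_hasEigenvector
    (Module.End.hasEigenvector_iff.2 ⟨Module.End.mem_eigenspace_iff.2 (hD j), by simp⟩)) u i

theorem filter_eigenvalue_mem {U : Submodule K (ι →₀ K)}
    (hD : ∀ i, D (Finsupp.single i 1) = ev i • Finsupp.single i 1) (hU : ∀ v ∈ U, D v ∈ U)
    {u : ι →₀ K} (hu : u ∈ U) (t : K) [DecidablePred fun i => ev i = t] :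
    u.filter (fun i => ev i = t) ∈ U := by
  classical
  -- The projection is a polynomial in `D`: interpolate the indicator of `t` on the eigenvalues
  -- that occur in `u`.
  let indicator : K → K := fun s => if s = t then 1 else 0
  let p := Lagrange.interpolate (u.support.image ev) id indicator
  have hproj : Polynomial.aeval D p u = u.filter fun i => ev i = t := by
    ext i
    rw [aeval_diagonal_apply hD, Finsupp.filter_apply]
    by_cases hui : u i = 0
    · simp [hui]
    · have hnode : p.eval (ev i) = indicator (ev i) :=
        Lagrange.eval_interpolate_at_node indicator Function.injective_id.injOn
          (Finset.mem_image_of_mem ev (Finsupp.mem_support_iff.2 hui))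
      simp [hnode, indicator]
  rw [← hproj]
  exact Polynomial.aeval_apply_smul_mem_of_le_comap hu _ D hU

end Diagonal

section Sectors

variable {m13 m23 m33 : ℤ}

theorem inR_zero {x : ℤ} : InR m13 m23 m33 0 x ↔ m23 ≤ x ∧ x ≤ m13 := Iff.rfl
theorem inR_one {x : ℤ} : InR m13 m23 m33 1 x ↔ m23 - 1 ≤ x ∧ x ≤ m13 := Iff.rfl
theorem inR_two {x : ℤ} : InR m13 m23 m33 2 x ↔ m23 ≤ x ∧ x ≤ m13 - 1 := Iff.rfl
theorem inR_three {x : ℤ} : InR m13 m23 m33 3 x ↔ m23 - 1 ≤ x ∧ x ≤ m13 - 1 := Iff.rfl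

theorem bv_of_inR {k : Fin 4} {x : ℤ} (hx : InR m13 m23 m33 k x) :
    bv m13 m23 m33 k x = Finsupp.single ⟨(k, x), hx⟩ 1 := dif_pos hx

theorem bv_of_not_inR {k : Fin 4} {x : ℤ} (hx : ¬ InR m13 m23 m33 k x) :
    bv m13 m23 m33 k x = 0 := dif_neg hx

theorem smul_bv {k : Fin 4} {x : ℤ} (hx : InR m13 m23 m33 k x) (a : ℂ) :
    a • bv m13 m23 m33 k x = Finsupp.single ⟨(k, x), hx⟩ a := by
  rw [bv_of_inR hx, Finsupp.smul_single_one]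

theorem bv_mem_Vk (k : Fin 4) (x : ℤ) : bv m13 m23 m33 k x ∈ Vk m13 m23 m33 k :=
  Submodule.subset_span ⟨x, rfl⟩

theorem Vk_le_iff {k : Fin 4} {U : Submodule ℂ (Wsp m13 m23 m33)} :
    Vk m13 m23 m33 k ≤ U ↔ ∀ x, InR m13 m23 m33 k x → bv m13 m23 m33 k x ∈ U := by
  refine ⟨fun h x _ => h (bv_mem_Vk k x), fun h => Submodule.span_le.2 ?_⟩
  rintro _ ⟨x, rfl⟩
  by_cases hx : InR m13 m23 m33 k x
  · exact h x hx
  · simp [bv_of_not_inR hx]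

theorem Vk_eq_supported (k : Fin 4) :
    Vk m13 m23 m33 k = Finsupp.supported ℂ ℂ {i : Idx m13 m23 m33 | i.1.1 = k} := by
  apply le_antisymm
  · refine Vk_le_iff.2 fun x hx => ?_
    rw [bv_of_inR hx]
    exact Finsupp.single_mem_supported ℂ 1 rfl
  · rw [Finsupp.supported_eq_span_single, Submodule.span_le]
    rintro _ ⟨⟨⟨l, x⟩, hx⟩, rfl : l = k, rfl⟩
    exact Set.mem_of_eq_of_mem (bv_of_inR hx).symm (bv_mem_Vk l x)

theorem iSup_Vk : ⨆ k, Vk m13 m23 m33 k = ⊤ := by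
  simp only [Vk_eq_supported, ← Finsupp.supported_iUnion, Set.iUnion_ofPred, exists_eq',
    Set.ofPred_true, Finsupp.supported_univ]

/-- The subspace `I₂ = V₁ ⊕ V₃` of `W`. -/
abbrev I2 (m13 m23 m33 : ℤ) : Submodule ℂ (Wsp m13 m23 m33) :=
  Vk m13 m23 m33 1 ⊔ Vk m13 m23 m33 3

theorem mem_I2_iff {u : Wsp m13 m23 m33} :
    u ∈ I2 m13 m23 m33 ↔ ∀ i : Idx m13 m23 m33, i.1.1 = 0 ∨ i.1.1 = 2 → u i = 0 := by
  have hcompl : ∀ k : Fin 4, ¬ (k = 1 ∨ k = 3) ↔ k = 0 ∨ k = 2 := by decide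
  rw [I2, Vk_eq_supported, Vk_eq_supported, ← Finsupp.supported_union, Finsupp.mem_supported']
  simp only [Set.mem_union, Set.mem_ofPred_eq, hcompl]

theorem I2_ne_top (hm : m23 ≤ m13) : I2 m13 m23 m33 ≠ ⊤ := by
  intro htop
  have hx : InR m13 m23 m33 0 m13 := inR_zero.2 ⟨hm, le_rfl⟩
  have hmem : bv m13 m23 m33 0 m13 ∈ I2 m13 m23 m33 := htop ▸ Submodule.mem_top
  simpa [bv_of_inR hx] using mem_I2_iff.1 hmem ⟨(0, m13), hx⟩ (Or.inl rfl)

theorem M32_eq_iff_zero {k : Fin 4} : M32 m13 m23 m33 k = m33 ↔ k = 0 := by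
  fin_cases k <;> simp [M32, trip]

theorem M32_eq_iff_one_or_two {k : Fin 4} : M32 m13 m23 m33 k = m33 + 1 ↔ k = 1 ∨ k = 2 := by
  fin_cases k <;> simp [M32, trip]

/-- The component of `u` of weight `(c, x)`: its projection to the joint eigenspace of `E33` with
eigenvalue `c` and `E11` with eigenvalue `x`. -/
def weightComponent (c x : ℤ) (u : Wsp m13 m23 m33) : Wsp m13 m23 m33 :=
  (u.filter fun i => M32 m13 m23 m33 i.1.1 = c).filter fun i => i.1.2 = x

theorem weightComponent_zero (u : Wsp m13 m23 m33) {x : ℤ} (hx : InR m13 m23 m33 0 x) :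
    weightComponent m33 x u = u ⟨(0, x), hx⟩ • bv m13 m23 m33 0 x := by
  rw [smul_bv hx]
  ext ⟨⟨k, y⟩, hy⟩
  rw [weightComponent, Finsupp.filter_apply, Finsupp.filter_apply, Finsupp.single_apply]
  simp only [M32_eq_iff_zero, Subtype.mk.injEq, Prod.mk.injEq]
  grind

theorem weightComponent_one (u : Wsp m13 m23 m33) {x : ℤ} (h1 : InR m13 m23 m33 1 x)
    (h2 : InR m13 m23 m33 2 x) :
    weightComponent (m33 + 1) x u =
      u ⟨(1, x), h1⟩ • bv m13 m23 m33 1 x + u ⟨(2, x), h2⟩ • bv m13 m23 m33 2 x := by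
  rw [smul_bv h1, smul_bv h2]
  ext ⟨⟨k, y⟩, hy⟩
  rw [weightComponent, Finsupp.filter_apply, Finsupp.filter_apply, Finsupp.add_apply,
    Finsupp.single_apply, Finsupp.single_apply]
  simp only [M32_eq_iff_one_or_two, Subtype.mk.injEq, Prod.mk.injEq]
  grind

end Sectors

section Representation

variable {q : ℝ} {m13 m23 m33 : ℤ} {R : GZ q m13 m23 m33} {U : Submodule ℂ (Wsp m13 m23 m33)}

theorem Vk_le_comap_even {E : Wsp m13 m23 m33 →ₗ[ℂ] Wsp m13 m23 m33}
    (hE : E = R.E11 ∨ E = R.E22 ∨ E = R.E33 ∨ E = R.E12 ∨ E = R.E21) (k : Fin 4) :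
    Vk m13 m23 m33 k ≤ (Vk m13 m23 m33 k).comap E := by
  refine Vk_le_iff.2 fun x hx => ?_
  rw [Submodule.mem_comap]
  rcases hE with rfl | rfl | rfl | rfl | rfl
  · exact R.hE11 k x hx ▸ Submodule.smul_mem _ _ (bv_mem_Vk k _)
  · exact R.hE22 k x hx ▸ Submodule.smul_mem _ _ (bv_mem_Vk k _)
  · exact R.hE33 k x hx ▸ Submodule.smul_mem _ _ (bv_mem_Vk k _)
  · exact R.hE12 k x hx ▸ Submodule.smul_mem _ _ (bv_mem_Vk k _)
  · exact R.hE21 k x hx ▸ Submodule.smul_mem _ _ (bv_mem_Vk k _)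

theorem E23_bv_one (R : GZ q m13 m23 m33) (h2 : m23 + m33 = 0) {x : ℤ}
    (hx : InR m13 m23 m33 1 x) : R.E23 (bv m13 m23 m33 1 x) = 0 := by
  simp [R.hE23₁ x hx, h2, qn_zero]

theorem I2_le_comap_E23 (R : GZ q m13 m23 m33) (h2 : m23 + m33 = 0) :
    I2 m13 m23 m33 ≤ (I2 m13 m23 m33).comap R.E23 := by
  refine sup_le (Vk_le_iff.2 fun x hx => ?_) (Vk_le_iff.2 fun x hx => ?_)
  · simp [E23_bv_one R h2 hx]
  · rw [Submodule.mem_comap, R.hE23₃ x hx, h2, qn_zero, zero_div, mul_zero, Complex.ofReal_zero,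
      zero_smul, sub_zero]
    exact Submodule.smul_mem _ _ (Submodule.mem_sup_left (bv_mem_Vk 1 x))

theorem I2_le_comap_E32 (R : GZ q m13 m23 m33) :
    I2 m13 m23 m33 ≤ (I2 m13 m23 m33).comap R.E32 := by
  refine sup_le (Vk_le_iff.2 fun x hx => ?_) (Vk_le_iff.2 fun x hx => ?_)
  · rw [Submodule.mem_comap, R.hE32₁ x hx]
    exact Submodule.smul_mem _ _ (Submodule.mem_sup_right (bv_mem_Vk 3 x))
  · simp [R.hE32₃ x hx]

theorem invariant_I2 (R : GZ q m13 m23 m33) (h2 : m23 + m33 = 0) :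
    Invariant q m13 m23 m33 R (I2 m13 m23 m33) := by
  intro E hE
  change I2 m13 m23 m33 ≤ (I2 m13 m23 m33).comap E
  have heven (hE : E = R.E11 ∨ E = R.E22 ∨ E = R.E33 ∨ E = R.E12 ∨ E = R.E21) :
      I2 m13 m23 m33 ≤ (I2 m13 m23 m33).comap E :=
    sup_le ((Vk_le_comap_even hE 1).trans (Submodule.comap_mono le_sup_left))
      ((Vk_le_comap_even hE 3).trans (Submodule.comap_mono le_sup_right))
  rcases hE with rfl | rfl | rfl | rfl | rfl | rfl | rfl
  iterate 5 · exact heven (by simp)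
  · exact I2_le_comap_E23 R h2
  · exact I2_le_comap_E32 R

namespace Invariant

theorem bv_add_one_mem (hq : 0 < q) (hq1 : q ≠ 1) (hU : Invariant q m13 m23 m33 R U) {k : Fin 4}
    {x : ℤ} (hx : InR m13 m23 m33 k x) (hx' : InR m13 m23 m33 k (x + 1))
    (hv : bv m13 m23 m33 k x ∈ U) : bv m13 m23 m33 k (x + 1) ∈ U := by
  have hE := hU R.E12 (by simp) _ hv
  rw [R.hE12 k x hx] at hE
  unfold InR at hx hx'
  exact mem_of_ofReal_smul_mem (Real.sqrt_ne_zero'.2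
    (mul_pos (qn_pos hq hq1 (by lia)) (qn_pos hq hq1 (by lia)))) hE

theorem bv_sub_one_mem (hq : 0 < q) (hq1 : q ≠ 1) (hU : Invariant q m13 m23 m33 R U) {k : Fin 4}
    {x : ℤ} (hx : InR m13 m23 m33 k x) (hx' : InR m13 m23 m33 k (x - 1))
    (hv : bv m13 m23 m33 k x ∈ U) : bv m13 m23 m33 k (x - 1) ∈ U := by
  have hE := hU R.E21 (by simp) _ hv
  rw [R.hE21 k x hx] at hE
  unfold InR at hx hx'
  exact mem_of_ofReal_smul_mem (Real.sqrt_ne_zero'.2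
    (mul_pos (qn_pos hq hq1 (by lia)) (qn_pos hq hq1 (by lia)))) hE

theorem Vk_le_of_bv_mem (hq : 0 < q) (hq1 : q ≠ 1) (hU : Invariant q m13 m23 m33 R U) {k : Fin 4}
    {x : ℤ} (hx : InR m13 m23 m33 k x) (hv : bv m13 m23 m33 k x ∈ U) :
    Vk m13 m23 m33 k ≤ U := by
  refine Vk_le_iff.2 fun y => ?_
  induction y using Int.inductionOn' (b := x) with
  | zero => exact fun _ => hv
  | succ y hxy ih =>
    intro hy'
    have hy : InR m13 m23 m33 k y := ⟨hx.1.trans hxy, by linarith [hy'.2]⟩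
    exact hU.bv_add_one_mem hq hq1 hy hy' (ih hy)
  | pred y hyx ih =>
    intro hy'
    have hy : InR m13 m23 m33 k y := ⟨by linarith [hy'.1], hyx.trans hx.2⟩
    exact hU.bv_sub_one_mem hq hq1 hy hy' (ih hy)

theorem weightComponent_mem (hU : Invariant q m13 m23 m33 R U) {u : Wsp m13 m23 m33} (hu : u ∈ U)
    (c x : ℤ) : weightComponent c x u ∈ U := by
  have hE33 := filter_eigenvalue_mem (D := R.E33) (ev := fun i => (M32 m13 m23 m33 i.1.1 : ℂ))
    (fun i => bv_of_inR i.2 ▸ R.hE33 _ _ i.2) (hU _ (by simp)) hu c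
  have hE11 := filter_eigenvalue_mem (D := R.E11) (ev := fun i => (i.1.2 : ℂ))
    (fun i => bv_of_inR i.2 ▸ R.hE11 _ _ i.2) (hU _ (by simp)) hE33 x
  simpa only [weightComponent, Int.cast_inj] using hE11

theorem bv_zero_mem_of_apply_zero_ne_zero (hU : Invariant q m13 m23 m33 R U)
    {u : Wsp m13 m23 m33} (hu : u ∈ U) {x : ℤ} (hx : InR m13 m23 m33 0 x)
    (hne : u ⟨(0, x), hx⟩ ≠ 0) : bv m13 m23 m33 0 x ∈ U :=
  (U.smul_mem_iff hne).1 (weightComponent_zero u hx ▸ hU.weightComponent_mem hu m33 x)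

theorem bv_zero_mem_of_apply_two_ne_zero (hq : 0 < q) (hq1 : q ≠ 1) (h2 : m23 + m33 = 0)
    (hU : Invariant q m13 m23 m33 R U) {u : Wsp m13 m23 m33} (hu : u ∈ U) {x : ℤ}
    (hx : InR m13 m23 m33 2 x) (hne : u ⟨(2, x), hx⟩ ≠ 0) : bv m13 m23 m33 0 x ∈ U := by
  have hx2 := inR_two.1 hx
  have hx1 : InR m13 m23 m33 1 x := inR_one.2 ⟨by lia, by lia⟩
  have hw := hU.weightComponent_mem hu (m33 + 1) x
  rw [weightComponent_one u hx1 hx] at hw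
  have hE := hU R.E23 (by simp) _ hw
  rw [map_add, map_smul, map_smul, E23_bv_one R h2 hx1, smul_zero, zero_add, R.hE23₂ x hx] at hE
  refine mem_of_ofReal_smul_mem (mul_ne_zero (Real.sqrt_ne_zero'.2 (div_pos ?_ ?_)) ?_)
    ((U.smul_mem_iff hne).1 hE)
  · exact qn_pos hq hq1 (by lia)
  · exact qn_pos hq hq1 (by lia)
  · exact (qn_pos hq hq1 (by lia)).ne'

theorem Vk_zero_le_of_not_le_I2 (hq : 0 < q) (hq1 : q ≠ 1) (h2 : m23 + m33 = 0)
    (hU : Invariant q m13 m23 m33 R U) (hle : ¬ U ≤ I2 m13 m23 m33) : Vk m13 m23 m33 0 ≤ U := by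
  obtain ⟨u, hu, hnot⟩ := SetLike.not_le_iff_exists.1 hle
  simp only [mem_I2_iff, not_forall] at hnot
  obtain ⟨⟨⟨k, x⟩, hx⟩, rfl | rfl, hne⟩ := hnot
  · exact hU.Vk_le_of_bv_mem hq hq1 hx (hU.bv_zero_mem_of_apply_zero_ne_zero hu hx hne)
  · have hx0 : InR m13 m23 m33 0 x := inR_zero.2 ⟨hx.1, by linarith [(inR_two.1 hx).2]⟩
    exact hU.Vk_le_of_bv_mem hq hq1 hx0 (hU.bv_zero_mem_of_apply_two_ne_zero hq hq1 h2 hu hx hne)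

theorem Vk_one_le (hq : 0 < q) (hq1 : q ≠ 1) (hm : m23 ≤ m13) (hU : Invariant q m13 m23 m33 R U)
    (hV0 : Vk m13 m23 m33 0 ≤ U) : Vk m13 m23 m33 1 ≤ U := by
  have htop : InR m13 m23 m33 0 m13 := inR_zero.2 ⟨hm, le_rfl⟩
  have hE := hU R.E32 (by simp) _ (hV0 (bv_mem_Vk 0 m13))
  -- At the top of sector `0` the sector-`2` term of `E32` is out of range.
  rw [R.hE32₀ m13 htop, bv_of_not_inR (k := 2) (by rw [inR_two]; lia), smul_zero, add_zero] at hE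
  refine hU.Vk_le_of_bv_mem hq hq1 (inR_one.2 ⟨by lia, le_rfl⟩) (mem_of_ofReal_smul_mem ?_ hE)
  exact Real.sqrt_ne_zero'.2 (div_pos (qn_pos hq hq1 (by lia)) (qn_pos hq hq1 (by lia)))

theorem Vk_two_le (hq : 0 < q) (hq1 : q ≠ 1) (hU : Invariant q m13 m23 m33 R U)
    (hV0 : Vk m13 m23 m33 0 ≤ U) (hV1 : Vk m13 m23 m33 1 ≤ U) : Vk m13 m23 m33 2 ≤ U := by
  refine Vk_le_iff.2 fun x hx => ?_
  have hx2 := inR_two.1 hx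
  have hE := hU R.E32 (by simp) _ (hV0 (bv_mem_Vk 0 x))
  rw [R.hE32₀ x (inR_zero.2 ⟨hx2.1, by lia⟩),
    Submodule.add_mem_iff_right _ (U.smul_mem _ (hV1 (bv_mem_Vk 1 x)))] at hE
  refine mem_of_ofReal_smul_mem (div_ne_zero (Real.sqrt_ne_zero'.2 (mul_pos ?_ ?_)) ?_) hE
  · exact qn_pos hq hq1 (by lia)
  · exact qn_pos hq hq1 (by lia)
  · exact (qn_pos hq hq1 (by lia)).ne'

theorem Vk_three_le (hq : 0 < q) (hq1 : q ≠ 1) (hU : Invariant q m13 m23 m33 R U)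
    (hV1 : Vk m13 m23 m33 1 ≤ U) : Vk m13 m23 m33 3 ≤ U := by
  refine Vk_le_iff.2 fun x hx => ?_
  have hx3 := inR_three.1 hx
  have hE := hU R.E32 (by simp) _ (hV1 (bv_mem_Vk 1 x))
  rw [R.hE32₁ x (inR_one.2 ⟨hx3.1, by lia⟩)] at hE
  refine mem_of_ofReal_smul_mem (mul_ne_zero hq.ne' (Real.sqrt_ne_zero'.2 ?_)) hE
  exact div_pos (qn_pos hq hq1 (by lia)) (qn_pos hq hq1 (by lia))

theorem eq_top_of_Vk_zero_le (hq : 0 < q) (hq1 : q ≠ 1) (hm : m23 ≤ m13)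
    (hU : Invariant q m13 m23 m33 R U) (hV0 : Vk m13 m23 m33 0 ≤ U) : U = ⊤ := by
  have hV1 := hU.Vk_one_le hq hq1 hm hV0
  have hV2 := hU.Vk_two_le hq hq1 hV0 hV1
  have hV3 := hU.Vk_three_le hq hq1 hV1
  rw [eq_top_iff, ← iSup_Vk, iSup_le_iff, Fin.forall_fin_succ, Fin.forall_fin_succ,
    Fin.forall_fin_two]
  exact ⟨hV0, hV1, hV2, hV3⟩

theorem le_I2_or_eq_top (hq : 0 < q) (hq1 : q ≠ 1) (hm : m23 ≤ m13) (h2 : m23 + m33 = 0)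
    (hU : Invariant q m13 m23 m33 R U) : U ≤ I2 m13 m23 m33 ∨ U = ⊤ :=
  or_iff_not_imp_left.2 fun hle =>
    hU.eq_top_of_Vk_zero_le hq hq1 hm (hU.Vk_zero_le_of_not_le_I2 hq hq1 h2 hle)

end Invariant

end Representation

/-- Assume `m23 + m33 = 0` (class 2 nontypicality). Then
`I_2 := V_1 ⊕ V_3` is a proper invariant subspace of `W`, every proper
invariant subspace of `W` is contained in `I_2`, and the operators induced by
`E11, E22, E33, E12, E21, E23, E32` on the quotient `W/I_2` leave no subspace
invariant except `{0}` and `W/I_2`: `W/I_2` carries the class 2 nontypical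
irreducible representation of `U_q[gl(2/1)]`. -/
theorem stmt_14 (q : ℝ) (hq : 0 < q) (hq1 : q ≠ 1)
    (m13 m23 m33 : ℤ) (hm : m23 ≤ m13) (R : GZ q m13 m23 m33)
    (h2 : m23 + m33 = 0) :
    Invariant q m13 m23 m33 R (Vk m13 m23 m33 1 ⊔ Vk m13 m23 m33 3) ∧
    Vk m13 m23 m33 1 ⊔ Vk m13 m23 m33 3 ≠ ⊤ ∧
    (∀ U : Submodule ℂ (Wsp m13 m23 m33), Invariant q m13 m23 m33 R U → U ≠ ⊤ →
      U ≤ Vk m13 m23 m33 1 ⊔ Vk m13 m23 m33 3) ∧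
    (∀ Ubar : Submodule ℂ
        (Wsp m13 m23 m33 ⧸ (Vk m13 m23 m33 1 ⊔ Vk m13 m23 m33 3)),
      (∀ E ∈ ({R.E11, R.E22, R.E33, R.E12, R.E21, R.E23, R.E32} :
          Set (Wsp m13 m23 m33 →ₗ[ℂ] Wsp m13 m23 m33)),
        ∀ x : Wsp m13 m23 m33,
          (Vk m13 m23 m33 1 ⊔ Vk m13 m23 m33 3).mkQ x ∈ Ubar →
          (Vk m13 m23 m33 1 ⊔ Vk m13 m23 m33 3).mkQ (E x) ∈ Ubar) →
      Ubar = ⊥ ∨ Ubar = ⊤) := by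
  have dichotomy {U} (hU : Invariant q m13 m23 m33 R U) : U ≤ I2 m13 m23 m33 ∨ U = ⊤ :=
    hU.le_I2_or_eq_top hq hq1 hm h2
  exact ⟨invariant_I2 R h2, I2_ne_top hm, fun U hU hne => (dichotomy hU).resolve_right hne,
    fun Ubar hUbar => eq_bot_or_eq_top_of_comap_mkQ (dichotomy hUbar)⟩
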